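/- Let q(t,r) = ∫_{-∞}^{r−t} ⟨s⟩^{-3/2} ds and δ_0 > 0. For any smooth function u on (0,∞)×R² (with r = |x| > 0), the following pointwise identity holds: ⟨t⟩^{-δ_0} e^{q} ∂_t u (−□u + u) = (1/2)∂_t( ⟨t⟩^{-δ_0} e^{q}( Σ_α (∂_α u)² + u² ) ) − ∂^i( ⟨t⟩^{-δ_0} e^{q} ∂_t u ∂_i u ) + (1/2) (⟨t⟩^{-δ_0} e^{q}/⟨t−r⟩^{3/2}) ( (G_1 u)² + (G_2 u)² + u² ) + (δ_0/2) t ⟨t⟩^{-(δ_0+2)} e^{q} ( Σ_α (∂_α u)² + u² ), where G_i = (x_i/r)∂_t + ∂_i and the sums over α run over {0,1,2}. -/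

import Mathlib

noncomputable def pt (m : ℝ → ℝ → ℝ → ℝ) (t x y : ℝ) : ℝ := deriv (fun s => m s x y) t
noncomputable def px (m : ℝ → ℝ → ℝ → ℝ) (t x y : ℝ) : ℝ := deriv (fun s => m t s y) x
noncomputable def py (m : ℝ → ℝ → ℝ → ℝ) (t x y : ℝ) : ℝ := deriv (fun s => m t x s) y

def IsSmoothFn (m : ℝ → ℝ → ℝ → ℝ) : Prop :=
  ContDiff ℝ (⊤ : ℕ∞) (fun p : ℝ × ℝ × ℝ => m p.1 p.2.1 p.2.2)

noncomputable def pd (α : Fin 3) : (ℝ → ℝ → ℝ → ℝ) → ℝ → ℝ → ℝ → ℝ := ![pt, px, py] α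

noncomputable def Om (m : ℝ → ℝ → ℝ → ℝ) : ℝ → ℝ → ℝ → ℝ :=
  fun t x y => x * py m t x y - y * px m t x y

noncomputable def Sc (m : ℝ → ℝ → ℝ → ℝ) : ℝ → ℝ → ℝ → ℝ :=
  fun t x y => t * pt m t x y + x * px m t x y + y * py m t x y

noncomputable def H1 (m : ℝ → ℝ → ℝ → ℝ) : ℝ → ℝ → ℝ → ℝ :=
  fun t x y => t * px m t x y + x * pt m t x y

noncomputable def H2 (m : ℝ → ℝ → ℝ → ℝ) : ℝ → ℝ → ℝ → ℝ :=
  fun t x y => t * py m t x y + y * pt m t x y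

noncomputable def rr (x y : ℝ) : ℝ := Real.sqrt (x ^ 2 + y ^ 2)

noncomputable def Box (m : ℝ → ℝ → ℝ → ℝ) : ℝ → ℝ → ℝ → ℝ :=
  fun t x y => -(pt (pt m) t x y) + px (px m) t x y + py (py m) t x y

noncomputable def G1 (m : ℝ → ℝ → ℝ → ℝ) : ℝ → ℝ → ℝ → ℝ :=
  fun t x y => (x / rr x y) * pt m t x y + px m t x y

noncomputable def G2 (m : ℝ → ℝ → ℝ → ℝ) : ℝ → ℝ → ℝ → ℝ :=
  fun t x y => (y / rr x y) * pt m t x y + py m t x y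

/-- The ghost weight q(t,r) = ∫_{-∞}^{r−t} ⟨s⟩^{-3/2} ds. -/
noncomputable def ghq (t r : ℝ) : ℝ :=
  ∫ s in Set.Iic (r - t), (Real.sqrt (1 + s ^ 2)) ^ (-(3 : ℝ) / 2)

/-- The energy density Σ_α (∂_α u)² + u². -/
noncomputable def en (u : ℝ → ℝ → ℝ → ℝ) (t x y : ℝ) : ℝ :=
  (pt u t x y) ^ 2 + (px u t x y) ^ 2 + (py u t x y) ^ 2 + (u t x y) ^ 2

/-! For any weight `W`, the product rule and the symmetry `∂_t ∂_i u = ∂_i ∂_t u` turn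
`W ∂_t u (-□u + u)` into `½ ∂_t (W (Σ_α (∂_α u)² + u²)) - ∂^i (W ∂_t u ∂_i u)` plus the error
`-½ ∂_t W (Σ_α (∂_α u)² + u²) + ∂_t u ∂^i W ∂_i u`.
For `W = ⟨t⟩^{-δ} e^q` put `a = W ⟨t - r⟩^{-3/2}`. Differentiating `⟨t⟩^{-δ}` yields the last term
of the identity, while `e^q` contributes `-a` to `∂_t W` and `a x_i / r` to `∂_i W`. Because `x / r`
is a unit vector, the latter contributions complete the square to
`½ a ((G₁ u)² + (G₂ u)² + u²)`. -/

open MeasureTheory Set Filter Topology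

theorem hasDerivAt_integral_Iic {E : Type*} [NormedAddCommGroup E] [NormedSpace ℝ E]
    [CompleteSpace E] {f : ℝ → E} {b : ℝ} (hf : Integrable f) (hb : ContinuousAt f b) :
    HasDerivAt (fun z => ∫ s in Iic z, f s) (f b) b := by
  have hsplit : (fun z => ∫ s in Iic z, f s)
      = fun z => (∫ s in Iic 0, f s) + ∫ s in (0 : ℝ)..z, f s := by
    funext z
    rw [← intervalIntegral.integral_Iic_sub_Iic hf.integrableOn hf.integrableOn,
      add_sub_cancel]
  rw [hsplit]
  exact (intervalIntegral.integral_hasDerivAt_right hf.intervalIntegrable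
    hf.aestronglyMeasurable.stronglyMeasurableAtFilter hb).const_add _

theorem integrable_sqrt_one_add_sq_rpow {p : ℝ} (hp : p < -1) :
    Integrable fun s : ℝ => √(1 + s ^ 2) ^ p := by
  have hint := integrable_rpow_neg_one_add_norm_sq (E := ℝ) (μ := volume) (r := -p)
    (by simpa using by linarith)
  refine hint.congr (.of_forall fun s => ?_)
  have hs : 0 ≤ 1 + s ^ 2 := by positivity
  simp only [Real.norm_eq_abs, sq_abs, neg_neg]
  rw [Real.sqrt_eq_rpow, ← Real.rpow_mul hs, one_div_mul_eq_div]

theorem hasDerivAt_sqrt_one_add_sq_rpow (p t : ℝ) :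
    HasDerivAt (fun s => √(1 + s ^ 2) ^ p) (p * t * √(1 + t ^ 2) ^ (p - 2)) t := by
  have hpos : 0 < 1 + t ^ 2 := by positivity
  have hsqrt : √(1 + t ^ 2) ≠ 0 := (Real.sqrt_pos.2 hpos).ne'
  have hinner : HasDerivAt (fun s : ℝ => 1 + s ^ 2) (2 * t) t := by
    simpa using (hasDerivAt_pow 2 t).const_add 1
  convert! (hinner.sqrt hpos.ne').rpow_const (p := p) (Or.inl hsqrt) using 1
  rw [show p - 2 = p - 1 - 1 by ring, Real.rpow_sub_one hsqrt (p - 1)]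
  field_simp

section PartialDerivatives

/-- The direction `∂_α` of `ℝ × ℝ × ℝ`, in the order `(t, x, y)` used by `pd`. -/
def coordDir : Fin 3 → ℝ × ℝ × ℝ := ![(1, 0, 0), (0, 1, 0), (0, 0, 1)]

variable {u : ℝ → ℝ → ℝ → ℝ} {t x y : ℝ}

theorem hasDerivAt_pt (hu : DifferentiableAt ℝ ↿u (t, x, y)) :
    HasDerivAt (fun s => u s x y) (pt u t x y) t :=
  (hu.comp t (f := fun s => (s, x, y)) (by fun_prop)).hasDerivAt

theorem hasDerivAt_px (hu : DifferentiableAt ℝ ↿u (t, x, y)) :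
    HasDerivAt (fun s => u t s y) (px u t x y) x :=
  (hu.comp x (f := fun s => (t, s, y)) (by fun_prop)).hasDerivAt

theorem hasDerivAt_py (hu : DifferentiableAt ℝ ↿u (t, x, y)) :
    HasDerivAt (fun s => u t x s) (py u t x y) y :=
  (hu.comp y (f := fun s => (t, x, s)) (by fun_prop)).hasDerivAt

theorem pd_eq_fderiv (α : Fin 3) (hu : DifferentiableAt ℝ ↿u (t, x, y)) :
    pd α u t x y = fderiv ℝ ↿u (t, x, y) (coordDir α) := by
  have hconst (a s : ℝ) := hasDerivAt_const s a
  fin_cases α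
  · exact (hu.hasFDerivAt.comp_hasDerivAt t
      ((hasDerivAt_id t).prodMk ((hconst x t).prodMk (hconst y t)))).deriv
  · exact (hu.hasFDerivAt.comp_hasDerivAt x
      ((hconst t x).prodMk ((hasDerivAt_id x).prodMk (hconst y x)))).deriv
  · exact (hu.hasFDerivAt.comp_hasDerivAt y
      ((hconst t y).prodMk ((hconst x y).prodMk (hasDerivAt_id y)))).deriv

theorem uncurry_pd_eventuallyEq {p : ℝ × ℝ × ℝ} (α : Fin 3) (hu : ContDiffAt ℝ 1 ↿u p) :
    ↿(pd α u) =ᶠ[𝓝 p] fun q => fderiv ℝ ↿u q (coordDir α) := by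
  filter_upwards [hu.eventually (by simp)] with q hq
  exact pd_eq_fderiv α (hq.differentiableAt one_ne_zero)

theorem contDiffAt_uncurry_pd {p : ℝ × ℝ × ℝ} {n : WithTop ℕ∞} (α : Fin 3)
    (hu : ContDiffAt ℝ (n + 1) ↿u p) : ContDiffAt ℝ n ↿(pd α u) p :=
  (hu.fderiv_right_succ.clm_apply contDiffAt_const).congr_of_eventuallyEq
    (uncurry_pd_eventuallyEq α (hu.of_le le_add_self))

theorem differentiableAt_uncurry_pd {p : ℝ × ℝ × ℝ} (α : Fin 3) (hu : ContDiffAt ℝ 2 ↿u p) :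
    DifferentiableAt ℝ ↿(pd α u) p :=
  (contDiffAt_uncurry_pd (n := 1) α (by simpa [one_add_one_eq_two] using hu)).differentiableAt
    one_ne_zero

theorem pd_pd_eq_fderiv_fderiv (α β : Fin 3) (hu : ContDiffAt ℝ 2 ↿u (t, x, y)) :
    pd α (pd β u) t x y = fderiv ℝ (fderiv ℝ ↿u) (t, x, y) (coordDir α) (coordDir β) := by
  have hderiv : DifferentiableAt ℝ (fderiv ℝ ↿u) (t, x, y) :=
    (hu.fderiv_right (m := 1) (by simp [one_add_one_eq_two])).differentiableAt one_ne_zero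
  rw [pd_eq_fderiv α (differentiableAt_uncurry_pd β hu),
    (uncurry_pd_eventuallyEq β (hu.of_le one_le_two)).fderiv_eq,
    fderiv_clm_apply hderiv (differentiableAt_const _)]
  simp

theorem pd_comm (α β : Fin 3) (hu : ContDiffAt ℝ 2 ↿u (t, x, y)) :
    pd α (pd β u) t x y = pd β (pd α u) t x y := by
  rw [pd_pd_eq_fderiv_fderiv α β hu, pd_pd_eq_fderiv_fderiv β α hu]
  exact (hu.isSymmSndFDerivAt (by simp)).eq _ _

end PartialDerivatives

section Multiplier

variable {u : ℝ → ℝ → ℝ → ℝ} {t x y : ℝ}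

theorem hasDerivAt_en_t (hu : ContDiffAt ℝ 2 ↿u (t, x, y)) :
    HasDerivAt (fun s => en u s x y)
      (2 * (pt u t x y * pt (pt u) t x y + px u t x y * px (pt u) t x y
        + py u t x y * py (pt u) t x y + u t x y * pt u t x y)) t := by
  have hsq (α : Fin 3) := (hasDerivAt_pt (differentiableAt_uncurry_pd α hu)).pow 2
  have htx : pt (px u) t x y = px (pt u) t x y := pd_comm 0 1 hu
  have hty : pt (py u) t x y = py (pt u) t x y := pd_comm 0 2 hu
  have hu_t := hasDerivAt_pt (hu.differentiableAt two_ne_zero)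
  convert! (((hsq 0).add (hsq 1)).add (hsq 2)).add (hu_t.pow 2) using 1
  simp only [pd, Matrix.cons_val, htx, hty]
  ring

theorem mul_pt_mul_neg_Box_add_self {W : ℝ → ℝ → ℝ → ℝ} {Wt Wx Wy : ℝ}
    (hWt : HasDerivAt (fun s => W s x y) Wt t) (hWx : HasDerivAt (fun s => W t s y) Wx x)
    (hWy : HasDerivAt (fun s => W t x s) Wy y) (hu : ContDiffAt ℝ 2 ↿u (t, x, y)) :
    W t x y * pt u t x y * (-(Box u t x y) + u t x y)
      = (1 / 2) * pt (fun t x y => W t x y * en u t x y) t x y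
        - (px (fun t x y => W t x y * pt u t x y * px u t x y) t x y
          + py (fun t x y => W t x y * pt u t x y * py u t x y) t x y)
        - (1 / 2) * Wt * en u t x y
        + pt u t x y * (Wx * px u t x y + Wy * py u t x y) := by
  have hpd (α : Fin 3) := differentiableAt_uncurry_pd α hu
  have henergy : pt (fun t x y => W t x y * en u t x y) t x y
      = Wt * en u t x y + W t x y
        * (2 * (pt u t x y * pt (pt u) t x y + px u t x y * px (pt u) t x y
          + py u t x y * py (pt u) t x y + u t x y * pt u t x y)) :=
    (hWt.mul (hasDerivAt_en_t hu)).deriv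
  have hflux_x : px (fun t x y => W t x y * pt u t x y * px u t x y) t x y
      = (Wx * pt u t x y + W t x y * px (pt u) t x y) * px u t x y
        + W t x y * pt u t x y * px (px u) t x y :=
    ((hWx.mul (hasDerivAt_px (hpd 0))).mul (hasDerivAt_px (hpd 1))).deriv
  have hflux_y : py (fun t x y => W t x y * pt u t x y * py u t x y) t x y
      = (Wy * pt u t x y + W t x y * py (pt u) t x y) * py u t x y
        + W t x y * pt u t x y * py (py u) t x y :=
    ((hWy.mul (hasDerivAt_py (hpd 0))).mul (hasDerivAt_py (hpd 2))).deriv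
  rw [henergy, hflux_x, hflux_y, Box]
  ring

end Multiplier

section GhostWeight

/-- The multiplier weight `⟨t⟩^{-δ} e^{q(t, r)}`, with `r = |(x, y)|`. -/
noncomputable def ghostWeight (δ t x y : ℝ) : ℝ :=
  √(1 + t ^ 2) ^ (-δ) * Real.exp (ghq t (rr x y))

variable {x y : ℝ}

theorem rr_comm (x y : ℝ) : rr x y = rr y x := by
  rw [rr, rr, add_comm]

theorem hasDerivAt_rr_left (hr : 0 < rr x y) : HasDerivAt (fun s => rr s y) (x / rr x y) x := by
  have hsq : HasDerivAt (fun s => s ^ 2 + y ^ 2) (2 * x) x := by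
    simpa using (hasDerivAt_pow 2 x).add_const (y ^ 2)
  simpa only [rr, mul_div_mul_left _ _ (two_ne_zero' ℝ)] using hsq.sqrt (Real.sqrt_pos.1 hr).ne'

theorem hasDerivAt_rr_right (hr : 0 < rr x y) : HasDerivAt (fun s => rr x s) (y / rr x y) y := by
  rw [rr_comm] at hr
  simpa only [rr_comm x] using hasDerivAt_rr_left hr

theorem hasDerivAt_ghq {T R : ℝ → ℝ} {T' R' s : ℝ} (hT : HasDerivAt T T' s)
    (hR : HasDerivAt R R' s) :
    HasDerivAt (fun s => ghq (T s) (R s))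
      ((R' - T') / √(1 + (T s - R s) ^ 2) ^ ((3 : ℝ) / 2)) s := by
  have hcont : Continuous fun s : ℝ => √(1 + s ^ 2) ^ (-(3 : ℝ) / 2) :=
    continuous_iff_continuousAt.2 fun s =>
      (hasDerivAt_sqrt_one_add_sq_rpow (-3 / 2) s).continuousAt
  have hq := (hasDerivAt_integral_Iic (integrable_sqrt_one_add_sq_rpow (by norm_num))
    hcont.continuousAt).comp s (hR.sub hT)
  convert! hq using 1
  rw [Pi.sub_apply, ← neg_sub (T s), neg_sq, neg_div, Real.rpow_neg (Real.sqrt_nonneg _),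
    div_eq_inv_mul]

theorem hasDerivAt_ghostWeight_t (δ t x y : ℝ) :
    HasDerivAt (fun s => ghostWeight δ s x y)
      (-δ * t * ghostWeight (δ + 2) t x y
        - ghostWeight δ t x y / √(1 + (t - rr x y) ^ 2) ^ ((3 : ℝ) / 2)) t := by
  have hq := hasDerivAt_ghq (hasDerivAt_id t) (hasDerivAt_const t (rr x y))
  convert! (hasDerivAt_sqrt_one_add_sq_rpow (-δ) t).mul hq.exp using 1
  simp only [ghostWeight, id, neg_add']
  ring

theorem hasDerivAt_ghostWeight_x (δ t : ℝ) (hr : 0 < rr x y) :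
    HasDerivAt (fun s => ghostWeight δ t s y)
      (ghostWeight δ t x y / √(1 + (t - rr x y) ^ 2) ^ ((3 : ℝ) / 2) * (x / rr x y)) x := by
  have hq := hasDerivAt_ghq (hasDerivAt_const x t) (hasDerivAt_rr_left hr)
  convert! hq.exp.const_mul (√(1 + t ^ 2) ^ (-δ)) using 1
  rw [ghostWeight]
  ring

theorem hasDerivAt_ghostWeight_y (δ t : ℝ) (hr : 0 < rr x y) :
    HasDerivAt (fun s => ghostWeight δ t x s)
      (ghostWeight δ t x y / √(1 + (t - rr x y) ^ 2) ^ ((3 : ℝ) / 2) * (y / rr x y)) y := by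
  rw [rr_comm] at hr
  simpa only [ghostWeight, rr_comm x] using hasDerivAt_ghostWeight_x δ t hr

end GhostWeight

theorem G1_sq_add_G2_sq_add_sq (u : ℝ → ℝ → ℝ → ℝ) (t : ℝ) {x y : ℝ} (hr : 0 < rr x y) :
    G1 u t x y ^ 2 + G2 u t x y ^ 2 + u t x y ^ 2
      = en u t x y
        + 2 * pt u t x y * (x / rr x y * px u t x y + y / rr x y * py u t x y) := by
  have hrr : rr x y ^ 2 = x ^ 2 + y ^ 2 := Real.sq_sqrt (by positivity)
  have hunit : (x / rr x y) ^ 2 + (y / rr x y) ^ 2 = 1 := by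
    rw [div_pow, div_pow, ← add_div, ← hrr, div_self (by positivity)]
  simp only [G1, G2, en]
  linear_combination pt u t x y ^ 2 * hunit

theorem ghost_weight_identity_general (δ : ℝ) {u : ℝ → ℝ → ℝ → ℝ} {t x y : ℝ}
    (hu : ContDiffAt ℝ 2 ↿u (t, x, y)) (hr : 0 < rr x y) :
    ghostWeight δ t x y * pt u t x y * (-(Box u t x y) + u t x y)
      = (1 / 2) * pt (fun t x y => ghostWeight δ t x y * en u t x y) t x y
        - (px (fun t x y => ghostWeight δ t x y * pt u t x y * px u t x y) t x y
          + py (fun t x y => ghostWeight δ t x y * pt u t x y * py u t x y) t x y)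
        + (1 / 2) * (ghostWeight δ t x y / √(1 + (t - rr x y) ^ 2) ^ ((3 : ℝ) / 2))
          * (G1 u t x y ^ 2 + G2 u t x y ^ 2 + u t x y ^ 2)
        + (δ / 2) * t * ghostWeight (δ + 2) t x y * en u t x y := by
  rw [mul_pt_mul_neg_Box_add_self (hasDerivAt_ghostWeight_t δ t x y)
    (hasDerivAt_ghostWeight_x δ t hr) (hasDerivAt_ghostWeight_y δ t hr) hu,
    G1_sq_add_G2_sq_add_sq u t hr]
  ring

theorem ghost_weight_identity (δ0 : ℝ) (hδ0 : 0 < δ0)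
    (u : ℝ → ℝ → ℝ → ℝ) (hu : IsSmoothFn u) :
    ∀ t x y : ℝ, 0 < t → 0 < rr x y →
      (Real.sqrt (1 + t ^ 2)) ^ (-δ0) * Real.exp (ghq t (rr x y)) * pt u t x y
          * (-(Box u t x y) + u t x y)
        = (1 / 2) * pt (fun t x y =>
              (Real.sqrt (1 + t ^ 2)) ^ (-δ0) * Real.exp (ghq t (rr x y))
                * en u t x y) t x y
          - (px (fun t x y =>
                (Real.sqrt (1 + t ^ 2)) ^ (-δ0) * Real.exp (ghq t (rr x y))
                  * pt u t x y * px u t x y) t x y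
             + py (fun t x y =>
                (Real.sqrt (1 + t ^ 2)) ^ (-δ0) * Real.exp (ghq t (rr x y))
                  * pt u t x y * py u t x y) t x y)
          + (1 / 2) * ((Real.sqrt (1 + t ^ 2)) ^ (-δ0) * Real.exp (ghq t (rr x y))
              / (Real.sqrt (1 + (t - rr x y) ^ 2)) ^ ((3 : ℝ) / 2))
              * ((G1 u t x y) ^ 2 + (G2 u t x y) ^ 2 + (u t x y) ^ 2)
          + (δ0 / 2) * t * (Real.sqrt (1 + t ^ 2)) ^ (-(δ0 + 2))
              * Real.exp (ghq t (rr x y)) * en u t x y := by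
  intro t x y _ hr
  have hu2 : ContDiffAt ℝ 2 ↿u (t, x, y) := (contDiff_infty.1 hu 2).contDiffAt
  simpa only [ghostWeight, ← mul_assoc] using ghost_weight_identity_general δ0 hu2 hr
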